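/- Let γ > 1, n ∈ ℕ, and let r satisfy 1 < r < r*(γ) and n < k(r) < n+1. Suppose (W, Z) is a smooth solution of the autonomous ODE system on an open interval containing 0, with (W(0), Z(0)) = (W₀, Z₀) and (W′(0), Z′(0)) = (W₁, Z₁). Set W_m = W^{(m)}(0) and Z_m = Z^{(m)}(0). Then for every m ≥ 2: D_{W,0}·W_m = N_{W,m−1} − Σ_{j=0}^{m−2} binom(m−1,j)·D_{W,m−1−j}·W_{j+1}, and Z_m·D_{Z,1}·(m − k(r)) = −Σ_{j=1}^{m−2} binom(m,j)·D_{Z,m−j}·Z_{j+1} + (N_{Z,m} − ∂_Z N_Z(W₀,Z₀)·Z_m) − Z₁·W_m·∂_W D_Z(W₀,Z₀), where the quantities D_{∘,j}, N_{∘,j} are computed from the derivative sequence (W_j, Z_j) as in the context. Moreover these relations determine the coefficients iteratively: D_{W,0} ≠ 0 and D_{Z,1}·(m − k(r)) ≠ 0 for every m ≥ 2, and the combination N_{Z,m} − ∂_Z N_Z(W₀,Z₀)·Z_m contains no occurrence of Z_m. -/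

import Mathlib

/-!
Near `0` both sides of each ODE are smooth functions of `ξ`, so all their derivatives at `0` agree.
Since `D_∘` is affine and `N_∘` is quadratic, the Leibniz rule turns this agreement into
`∑_{j ≤ m} binom(m, j) D_{∘,m-j} ∘_{j+1} = N_{∘,m}` (`iteratedDeriv_mul_deriv`,
`iteratedDeriv_quadratic`). The first relation is the case `m - 1` for `W`. In the case `m` for `Z`
the term with `Z_{m+1}` drops out because `D_Z(P_s) = 0`, and the coefficient of `Z_m` is
`m D_{Z,1} + Z₁ ∂_Z D_Z - ∂_Z N_Z(P_s)`. By the explicit formulas, `D_{Z,1}` and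
`∂_Z N_Z(P_s) - Z₁ ∂_Z D_Z` are `-1/4` times the denominator and numerator of `k(r)` (`DZ1_eq`,
`pZNZ_eq`), so this coefficient is `D_{Z,1} (m - k(r))`. These identities are linear in `ℛ₁` and
`ℛ₂`, so the signs of the radicands play no role.

As for non-degeneracy: `k(r)` lies strictly between consecutive integers, so it is neither `m` nor
`0`, and the latter rules out a zero denominator. Finally
`2 (γ - 1) D_W(P_s) = ℛ₁ + (γ - 3) r + γ + 1`, and `r < r*(γ)` makes the linear part positive
(`sonic_pos`).
-/

noncomputable section

open Real Filter Set Topology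

namespace SelfSimilarImplosion

/-- `α = (γ−1)/2`. -/
def alphaF (γ : ℝ) : ℝ := (γ - 1) / 2

/-- `D_W(W,Z) = 1 + (1/2)(W + Z + α(W − Z))`. -/
def DW (γ W Z : ℝ) : ℝ := 1 + (1 / 2) * (W + Z + alphaF γ * (W - Z))

/-- `D_Z(W,Z) = 1 + (1/2)(W + Z − α(W − Z))`. -/
def DZ (γ W Z : ℝ) : ℝ := 1 + (1 / 2) * (W + Z - alphaF γ * (W - Z))

/-- `N_W(W,Z) = −(r + (1/2)((1+2α)W + (1−α)Z))·W + (α/2)Z²`. -/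
def NW (γ r W Z : ℝ) : ℝ :=
  -(r + (1 / 2) * ((1 + 2 * alphaF γ) * W + (1 - alphaF γ) * Z)) * W + (alphaF γ / 2) * Z ^ 2

/-- `N_Z(W,Z) = −(r + (1/2)((1−α)W + (1+2α)Z))·Z + (α/2)W²`. -/
def NZ (γ r W Z : ℝ) : ℝ :=
  -(r + (1 / 2) * ((1 - alphaF γ) * W + (1 + 2 * alphaF γ) * Z)) * Z + (alphaF γ / 2) * W ^ 2

/-- The critical self-similar exponent `r*(γ)`. -/
def rStar (γ : ℝ) : ℝ :=
  if γ < 5 / 3 then 1 + 2 / (Real.sqrt (2 / (γ - 1)) + 1) ^ 2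
  else (3 * γ - 1) / (2 + Real.sqrt 3 * (γ - 1))

/-- `ℛ₁`. -/
def R1 (γ r : ℝ) : ℝ :=
  Real.sqrt (γ ^ 2 * (r - 3) ^ 2 - 2 * γ * (3 * r ^ 2 - 6 * r + 7) + 9 * r ^ 2 - 14 * r + 9)

/-- First coordinate `W₀` of the sonic point `P_s`. -/
def W₀ (γ r : ℝ) : ℝ :=
  (γ ^ 2 * r + (γ + 1) * R1 γ r - 3 * γ ^ 2 - 2 * γ * r + 10 * γ - 3 * r - 3) / (4 * (γ - 1) ^ 2)

/-- Second coordinate `Z₀` of the sonic point `P_s`. -/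
def Z₀ (γ r : ℝ) : ℝ :=
  (γ ^ 2 * r + (γ - 3) * R1 γ r - 3 * γ ^ 2 - 6 * γ * r + 6 * γ + 9 * r - 7) / (4 * (γ - 1) ^ 2)

/-- `ℛ₂`. -/
def R2 (γ r : ℝ) : ℝ :=
  (1 / (γ - 1)) *
    Real.sqrt (γ * ((76 - 27 * γ) * γ - 71) - (3 * γ - 5) * ((γ - 5) * γ + 2) * r ^ 2
      + (γ * (γ * (18 * γ - 52) + 50) - 8) * r
      + R1 γ r * (9 * (γ - 2) * γ + ((2 - 3 * γ) * γ + 5) * r + 5) + 18)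

/-- The first Taylor coefficient `W₁`. -/
def W₁ (γ r : ℝ) : ℝ :=
  (γ * (-3 * (R1 γ r + 6) - 3 * γ * (r - 3) + 2 * r) + R1 γ r + 5 * r + 5) / (4 * (γ - 1) ^ 2)

/-- The first Taylor coefficient `Z₁`. -/
def Z₁ (γ r : ℝ) : ℝ :=
  (-(3 * γ ^ 3 - 7 * γ ^ 2 + γ + 11) * r
      + γ * (γ * (9 * γ - 3 * R1 γ r - 25) + 10 * R1 γ r - 4 * (γ - 1) * R2 γ r + 27)
      - 3 * R1 γ r + 4 * (γ - 1) * R2 γ r - 3)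
    / (4 * (γ - 1) ^ 2 * (γ + 1))

/-- The eigenvalue-ratio function `k(r)`. -/
def kFun (γ r : ℝ) : ℝ :=
  (-4 + (1 + γ) * (r - 1) / (γ - 1) - R2 γ r) / (-4 + (1 + γ) * (r - 1) / (γ - 1) + R2 γ r)


/-- The self-similar profile equation for a function `𝒲` of `ζ`. -/
def ProfileEqn (γ r : ℝ) (Wc : ℝ → ℝ) (ζ : ℝ) : Prop :=
  (r - 1) * Wc ζ
      + (ζ + (1 / 2) * (Wc ζ - Wc (-ζ) + alphaF γ * (Wc ζ + Wc (-ζ)))) * deriv Wc ζ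
      + (alphaF γ / (2 * ζ)) * ((Wc ζ) ^ 2 - (Wc (-ζ)) ^ 2) = 0

/-- `(W, Z)` solves the autonomous ODE system on the set `s`. -/
def IsOdeSolutionOn (γ r : ℝ) (W Z : ℝ → ℝ) (s : Set ℝ) : Prop :=
  ∀ ξ ∈ s,
    DW γ (W ξ) (Z ξ) * deriv W ξ = NW γ r (W ξ) (Z ξ) ∧
    DZ γ (W ξ) (Z ξ) * deriv Z ξ = NZ γ r (W ξ) (Z ξ)

/-- The `Z`-partial derivative of `N_Z` at `(W, Z)`. -/
def pZNZ (γ r W Z : ℝ) : ℝ :=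
  -(r + (1 / 2) * ((1 - alphaF γ) * W + (1 + 2 * alphaF γ) * Z)) - ((1 + 2 * alphaF γ) / 2) * Z

/-- `∂_W N_W(W,Z)`. -/
def gradNW1 (γ r W Z : ℝ) : ℝ := -r - (1 + 2 * alphaF γ) * W - ((1 - alphaF γ) / 2) * Z

/-- `∂_Z N_W(W,Z)`. -/
def gradNW2 (γ W Z : ℝ) : ℝ := -((1 - alphaF γ) / 2) * W + alphaF γ * Z

/-- `∂_W N_Z(W,Z)`. -/
def gradNZ1 (γ W Z : ℝ) : ℝ := alphaF γ * W - ((1 - alphaF γ) / 2) * Z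

/-- `∂_Z N_Z(W,Z)`. -/
def gradNZ2 (γ r W Z : ℝ) : ℝ := -r - ((1 - alphaF γ) / 2) * W - (1 + 2 * alphaF γ) * Z

/-- The quadratic form `(a,b)·HN_W·(c,d)ᵀ` of the constant Hessian of `N_W`. -/
def hessNW (γ a b c d : ℝ) : ℝ :=
  -(1 + 2 * alphaF γ) * a * c - ((1 - alphaF γ) / 2) * (a * d + b * c) + alphaF γ * b * d

/-- The quadratic form `(a,b)·HN_Z·(c,d)ᵀ` of the constant Hessian of `N_Z`. -/
def hessNZ (γ a b c d : ℝ) : ℝ :=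
  alphaF γ * a * c - ((1 - alphaF γ) / 2) * (a * d + b * c) - (1 + 2 * alphaF γ) * b * d

/-- `D_{W,m}` computed from the sequences `(W_m)`, `(Z_m)`. -/
def DWseq (γ : ℝ) (Ws Zs : ℕ → ℝ) : ℕ → ℝ
  | 0 => DW γ (Ws 0) (Zs 0)
  | m + 1 => ((1 + alphaF γ) / 2) * Ws (m + 1) + ((1 - alphaF γ) / 2) * Zs (m + 1)

/-- `D_{Z,m}` computed from the sequences `(W_m)`, `(Z_m)`. -/
def DZseq (γ : ℝ) (Ws Zs : ℕ → ℝ) : ℕ → ℝ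
  | 0 => DZ γ (Ws 0) (Zs 0)
  | m + 1 => ((1 - alphaF γ) / 2) * Ws (m + 1) + ((1 + alphaF γ) / 2) * Zs (m + 1)

/-- `N_{W,m}` computed from the sequences `(W_m)`, `(Z_m)`. -/
def NWseq (γ r : ℝ) (Ws Zs : ℕ → ℝ) : ℕ → ℝ
  | 0 => NW γ r (Ws 0) (Zs 0)
  | m + 1 =>
      gradNW1 γ r (Ws 0) (Zs 0) * Ws (m + 1) + gradNW2 γ (Ws 0) (Zs 0) * Zs (m + 1)
        + ∑ j ∈ Finset.Ico 1 (m + 1),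
            (Nat.choose m (j - 1) : ℝ) * hessNW γ (Ws (m + 1 - j)) (Zs (m + 1 - j)) (Ws j) (Zs j)

/-- `N_{Z,m}` computed from the sequences `(W_m)`, `(Z_m)`. -/
def NZseq (γ r : ℝ) (Ws Zs : ℕ → ℝ) : ℕ → ℝ
  | 0 => NZ γ r (Ws 0) (Zs 0)
  | m + 1 =>
      gradNZ1 γ (Ws 0) (Zs 0) * Ws (m + 1) + gradNZ2 γ r (Ws 0) (Zs 0) * Zs (m + 1)
        + ∑ j ∈ Finset.Ico 1 (m + 1),
            (Nat.choose m (j - 1) : ℝ) * hessNZ γ (Ws (m + 1 - j)) (Zs (m + 1 - j)) (Ws j) (Zs j)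

/-! ### Calculus of the Taylor coefficients -/

/-- Leibniz rule for `f · g'`, ordered so that the summation index counts the derivatives
falling on `g'`, as in the recursion. -/
lemma iteratedDeriv_mul_deriv {f g : ℝ → ℝ} {x : ℝ} (hf : ContDiffAt ℝ (⊤ : ℕ∞) f x)
    (hg : ContDiffAt ℝ (⊤ : ℕ∞) (deriv g) x) (m : ℕ) :
    iteratedDeriv m (fun ξ => f ξ * deriv g ξ) x =
      ∑ j ∈ Finset.range (m + 1),
        (Nat.choose m j : ℝ) * iteratedDeriv (m - j) f x * iteratedDeriv (j + 1) g x := by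
  have hf' : ContDiffAt ℝ m f x := hf.of_le (by exact_mod_cast le_top)
  have hg' : ContDiffAt ℝ m (deriv g) x := hg.of_le (by exact_mod_cast le_top)
  have h : (fun ξ => f ξ * deriv g ξ) = fun ξ => deriv g ξ * f ξ := by
    funext ξ; ring
  rw [h, iteratedDeriv_fun_mul hg' hf']
  refine Finset.sum_congr rfl fun j _ => ?_
  rw [iteratedDeriv_succ']
  ring

lemma iteratedDeriv_affine {W Z : ℝ → ℝ} {x : ℝ} (hW : ContDiffAt ℝ (⊤ : ℕ∞) W x)
    (hZ : ContDiffAt ℝ (⊤ : ℕ∞) Z x) (c p q : ℝ) (i : ℕ) :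
    iteratedDeriv (i + 1) (fun ξ => c + (p * W ξ + q * Z ξ)) x =
      p * iteratedDeriv (i + 1) W x + q * iteratedDeriv (i + 1) Z x := by
  have hW' : ContDiffAt ℝ ((i + 1 : ℕ) : WithTop ℕ∞) W x := hW.of_le (by exact_mod_cast le_top)
  have hZ' : ContDiffAt ℝ ((i + 1 : ℕ) : WithTop ℕ∞) Z x := hZ.of_le (by exact_mod_cast le_top)
  rw [iteratedDeriv_const_add (Nat.succ_pos i),
    iteratedDeriv_fun_add (contDiffAt_const.mul hW') (contDiffAt_const.mul hZ'),
    iteratedDeriv_const_mul_field, iteratedDeriv_const_mul_field]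

/-- Taylor coefficients of a quadratic polynomial `Q` along a curve `(W, Z)`. The Hessian of `Q`
is `[[A, B], [B, C]]`; the formula is the Leibniz rule for `∇Q(W, Z) · (W', Z')`. -/
lemma iteratedDeriv_quadratic {W Z : ℝ → ℝ} {x : ℝ}
    (hW : ContDiffAt ℝ (⊤ : ℕ∞) W x) (hZ : ContDiffAt ℝ (⊤ : ℕ∞) Z x)
    (hW' : ContDiffAt ℝ (⊤ : ℕ∞) (deriv W) x) (hZ' : ContDiffAt ℝ (⊤ : ℕ∞) (deriv Z) x)
    (p q A B C : ℝ) (m : ℕ) :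
    iteratedDeriv (m + 1) (fun ξ => p * W ξ + q * Z ξ + A / 2 * W ξ ^ 2 + B * (W ξ * Z ξ)
        + C / 2 * Z ξ ^ 2) x =
      (p + (A * W x + B * Z x)) * iteratedDeriv (m + 1) W x
      + (q + (B * W x + C * Z x)) * iteratedDeriv (m + 1) Z x
      + ∑ j ∈ Finset.Ico 1 (m + 1), (Nat.choose m (j - 1) : ℝ) *
          ((A * iteratedDeriv (m + 1 - j) W x + B * iteratedDeriv (m + 1 - j) Z x)
              * iteratedDeriv j W x
            + (B * iteratedDeriv (m + 1 - j) W x + C * iteratedDeriv (m + 1 - j) Z x)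
              * iteratedDeriv j Z x) := by
  have hev : deriv (fun ξ => p * W ξ + q * Z ξ + A / 2 * W ξ ^ 2 + B * (W ξ * Z ξ)
        + C / 2 * Z ξ ^ 2) =ᶠ[𝓝 x]
      fun ξ => (p + (A * W ξ + B * Z ξ)) * deriv W ξ + (q + (B * W ξ + C * Z ξ)) * deriv Z ξ := by
    have h1 : ∀ᶠ ξ in 𝓝 x, ContDiffAt ℝ 1 W ξ :=
      (hW.of_le (by exact_mod_cast le_top)).eventually (by simp)
    have h2 : ∀ᶠ ξ in 𝓝 x, ContDiffAt ℝ 1 Z ξ :=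
      (hZ.of_le (by exact_mod_cast le_top)).eventually (by simp)
    filter_upwards [h1, h2] with ξ h1 h2
    have d1 := (h1.differentiableAt (by simp)).hasDerivAt
    have d2 := (h2.differentiableAt (by simp)).hasDerivAt
    have := ((((d1.const_mul p).add (d2.const_mul q)).add ((d1.pow 2).const_mul (A / 2))).add
      ((d1.mul d2).const_mul B)).add ((d2.pow 2).const_mul (C / 2))
    refine (HasDerivAt.deriv (f := fun ξ => p * W ξ + q * Z ξ + A / 2 * W ξ ^ 2
      + B * (W ξ * Z ξ) + C / 2 * Z ξ ^ 2) this).trans ?_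
    push_cast
    ring
  have hu : ContDiffAt ℝ (⊤ : ℕ∞) (fun ξ => p + (A * W ξ + B * Z ξ)) x := by fun_prop
  have hv : ContDiffAt ℝ (⊤ : ℕ∞) (fun ξ => q + (B * W ξ + C * Z ξ)) x := by fun_prop
  rw [iteratedDeriv_succ', hev.iteratedDeriv_eq,
    iteratedDeriv_fun_add ((hu.mul hW').of_le (by exact_mod_cast le_top))
      ((hv.mul hZ').of_le (by exact_mod_cast le_top)),
    iteratedDeriv_mul_deriv hu hW', iteratedDeriv_mul_deriv hv hZ',
    Finset.sum_range_succ, Finset.sum_range_succ, Finset.sum_Ico_eq_sum_range]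
  have e : ∀ j ∈ Finset.range m, m - j = (m - j - 1) + 1 := fun j hj => by
    have := Finset.mem_range.1 hj; omega
  have s1 : ∀ c s t : ℝ, ∀ U : ℝ → ℝ, ∑ j ∈ Finset.range m, (Nat.choose m j : ℝ)
        * iteratedDeriv (m - j) (fun ξ => c + (s * W ξ + t * Z ξ)) x * iteratedDeriv (j + 1) U x
      = ∑ j ∈ Finset.range m, (Nat.choose m j : ℝ)
        * (s * iteratedDeriv (m - j) W x + t * iteratedDeriv (m - j) Z x)
        * iteratedDeriv (j + 1) U x := fun c s t U => by
    refine Finset.sum_congr rfl fun j hj => ?_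
    rw [e j hj, iteratedDeriv_affine hW hZ]
  rw [s1, s1]
  have s2 : ∑ k ∈ Finset.range (m + 1 - 1), (Nat.choose m (1 + k - 1) : ℝ) *
          ((A * iteratedDeriv (m + 1 - (1 + k)) W x + B * iteratedDeriv (m + 1 - (1 + k)) Z x)
              * iteratedDeriv (1 + k) W x
            + (B * iteratedDeriv (m + 1 - (1 + k)) W x + C * iteratedDeriv (m + 1 - (1 + k)) Z x)
              * iteratedDeriv (1 + k) Z x)
      = ∑ j ∈ Finset.range m, ((Nat.choose m j : ℝ)
          * (A * iteratedDeriv (m - j) W x + B * iteratedDeriv (m - j) Z x)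
          * iteratedDeriv (j + 1) W x
        + (Nat.choose m j : ℝ)
          * (B * iteratedDeriv (m - j) W x + C * iteratedDeriv (m - j) Z x)
          * iteratedDeriv (j + 1) Z x) := by
    refine Finset.sum_congr (by simp) fun k _ => ?_
    rw [show 1 + k - 1 = k by omega, show m + 1 - (1 + k) = m - k by omega, add_comm 1 k]
    ring
  rw [s2, Finset.sum_add_distrib]
  simp only [Nat.choose_self, Nat.sub_self, iteratedDeriv_zero]
  push_cast
  ring

/-! ### Algebra at the sonic point -/

/-- Below the critical exponent the linear expression `(γ − 3)r + γ + 1` is positive; this is the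
part of `(γ - 1)² (W₀ − Z₀)` that does not involve `ℛ₁`. -/
lemma sonic_pos {γ r : ℝ} (hγ : 1 < γ) (hr1 : 1 < r) (hr2 : r < rStar γ) :
    0 < (γ - 3) * r + γ + 1 := by
  unfold rStar at hr2
  split_ifs at hr2 with h
  · set q := Real.sqrt (2 / (γ - 1)) with hq
    have hγ0 : 0 < γ - 1 := by linarith
    have hq0 : 0 ≤ q := Real.sqrt_nonneg _
    have hq2 : q ^ 2 * (γ - 1) = 2 := by
      rw [hq, Real.sq_sqrt (by positivity)]; field_simp
    have h1 : (r - 1) * (q + 1) ^ 2 < 2 := by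
      rw [← lt_div_iff₀ (by positivity)]; linarith
    -- With `s = r - 1`, `β = γ - 1`, the claim is `(2 - β) s < 2 β`; as `q² β = 2`, it follows
    -- from `(q² - 1) s ≤ (q + 1)² s < 2` after multiplication by `β`.
    have h2 : (q ^ 2 - 1) * (r - 1) < 2 := by nlinarith
    have h3 : (γ - 1) * ((q ^ 2 - 1) * (r - 1)) < (γ - 1) * 2 := by gcongr
    have h4 : (γ - 1) * ((q ^ 2 - 1) * (r - 1)) = (2 - (γ - 1)) * (r - 1) := by
      rw [← hq2]; ring
    linarith
  · have h3 : (17 / 10 : ℝ) < Real.sqrt 3 := Real.lt_sqrt_of_sq_lt (by norm_num)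
    have hβ : 2 / 3 ≤ γ - 1 := by linarith
    have hd : 0 < 2 + Real.sqrt 3 * (γ - 1) := by positivity
    rw [lt_div_iff₀ hd] at hr2
    by_cases h5 : 3 ≤ γ
    · nlinarith
    have h4 : (r - 1) * (2 + Real.sqrt 3 * (γ - 1)) < 13 / 10 * (γ - 1) := by nlinarith
    have h6 : (r - 1) * 2 < 13 / 10 * (γ - 1) := by
      nlinarith [mul_nonneg (sub_nonneg.2 hr1.le)
        (mul_nonneg (Real.sqrt_nonneg 3) (by linarith : 0 ≤ γ - 1))]
    nlinarith

lemma DW_sonic_ne_zero {γ r : ℝ} (hγ : 1 < γ) (hr1 : 1 < r) (hr2 : r < rStar γ) :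
    DW γ (W₀ γ r) (Z₀ γ r) ≠ 0 := by
  have h0 : γ - 1 ≠ 0 := by linarith
  have h : DW γ (W₀ γ r) (Z₀ γ r) = (R1 γ r + ((γ - 3) * r + γ + 1)) / (2 * (γ - 1)) := by
    unfold DW W₀ Z₀ alphaF; field_simp; ring
  rw [h]
  have := sonic_pos hγ hr1 hr2
  have h1 : 0 ≤ R1 γ r := Real.sqrt_nonneg _
  have h2 : 0 < γ - 1 := by linarith
  positivity

lemma DZ_sonic {γ r : ℝ} (hγ : 1 < γ) : DZ γ (W₀ γ r) (Z₀ γ r) = 0 := by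
  have h0 : γ - 1 ≠ 0 := by linarith
  unfold DZ W₀ Z₀ alphaF; field_simp; ring

/-- `D_{Z,1}` is `-1/4` times the denominator of `k(r)`. -/
lemma DZ1_eq {γ r : ℝ} (hγ : 1 < γ) :
    (1 - alphaF γ) / 2 * W₁ γ r + (1 + alphaF γ) / 2 * Z₁ γ r =
      -(1 / 4) * (-4 + (1 + γ) * (r - 1) / (γ - 1) + R2 γ r) := by
  have h0 : γ - 1 ≠ 0 := by linarith
  have h1 : γ + 1 ≠ 0 := by linarith
  unfold W₁ Z₁ alphaF; field_simp; ring

/-- `∂_Z N_Z(P_s) − ∂_Z D_Z · Z₁` is `-1/4` times the numerator of `k(r)`. -/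
lemma pZNZ_eq {γ r : ℝ} (hγ : 1 < γ) :
    pZNZ γ r (W₀ γ r) (Z₀ γ r) - (1 + alphaF γ) / 2 * Z₁ γ r =
      -(1 / 4) * (-4 + (1 + γ) * (r - 1) / (γ - 1) - R2 γ r) := by
  have h0 : γ - 1 ≠ 0 := by linarith
  have h1 : γ + 1 ≠ 0 := by linarith
  unfold pZNZ W₀ Z₀ Z₁ alphaF; field_simp; ring

lemma pZNZ_eq_gradNZ2 (γ r w z : ℝ) : pZNZ γ r w z = gradNZ2 γ r w z := by
  unfold pZNZ gradNZ2; ring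

/-! ### The recursion -/

/-- Proposition 2.2: the Taylor coefficients at the sonic point of a smooth
solution through `P_s` with gradient `(W₁, Z₁)` satisfy the stated recursion, which is
iteratively solvable. -/
theorem statement5 (γ r : ℝ) (hγ : 1 < γ) (n : ℕ)
    (hr1 : 1 < r) (hr2 : r < rStar γ)
    (hk1 : (n : ℝ) < kFun γ r) (hk2 : kFun γ r < (n : ℝ) + 1)
    (W Z : ℝ → ℝ) (a b : ℝ) (ha : a < 0) (hb : 0 < b)
    (hWsm : ContDiffOn ℝ (⊤ : ℕ∞) W (Set.Ioo a b))
    (hZsm : ContDiffOn ℝ (⊤ : ℕ∞) Z (Set.Ioo a b))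
    (hode : IsOdeSolutionOn γ r W Z (Set.Ioo a b))
    (hW0 : W 0 = W₀ γ r) (hZ0 : Z 0 = Z₀ γ r)
    (hW1 : deriv W 0 = W₁ γ r) (hZ1 : deriv Z 0 = Z₁ γ r) :
    ∀ m : ℕ, 2 ≤ m →
      let Ws : ℕ → ℝ := fun i => iteratedDeriv i W 0
      let Zs : ℕ → ℝ := fun i => iteratedDeriv i Z 0
      (DWseq γ Ws Zs 0 * Ws m =
          NWseq γ r Ws Zs (m - 1)
            - ∑ j ∈ Finset.range (m - 1),
                (Nat.choose (m - 1) j : ℝ) * DWseq γ Ws Zs (m - 1 - j) * Ws (j + 1)) ∧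
      (Zs m * DZseq γ Ws Zs 1 * ((m : ℝ) - kFun γ r) =
          -(∑ j ∈ Finset.Ico 1 (m - 1),
                (Nat.choose m j : ℝ) * DZseq γ Ws Zs (m - j) * Zs (j + 1))
            + (NZseq γ r Ws Zs m - pZNZ γ r (W₀ γ r) (Z₀ γ r) * Zs m)
            - Z₁ γ r * Ws m * ((1 - alphaF γ) / 2)) ∧
      DWseq γ Ws Zs 0 ≠ 0 ∧
      DZseq γ Ws Zs 1 * ((m : ℝ) - kFun γ r) ≠ 0 ∧
      (∀ z : ℝ,
        NZseq γ r Ws (Function.update Zs m z) m - pZNZ γ r (W₀ γ r) (Z₀ γ r) * z =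
          NZseq γ r Ws Zs m - pZNZ γ r (W₀ γ r) (Z₀ γ r) * Zs m) := by
  have hopen : IsOpen (Set.Ioo a b) := isOpen_Ioo
  have hmem : Set.Ioo a b ∈ 𝓝 (0 : ℝ) := hopen.mem_nhds ⟨ha, hb⟩
  have cW : ContDiffAt ℝ (⊤ : ℕ∞) W 0 := hWsm.contDiffAt hmem
  have cZ : ContDiffAt ℝ (⊤ : ℕ∞) Z 0 := hZsm.contDiffAt hmem
  have cW' : ContDiffAt ℝ (⊤ : ℕ∞) (deriv W) 0 :=
    (hWsm.deriv_of_isOpen hopen (by simp)).contDiffAt hmem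
  have cZ' : ContDiffAt ℝ (⊤ : ℕ∞) (deriv Z) 0 :=
    (hZsm.deriv_of_isOpen hopen (by simp)).contDiffAt hmem
  have eW : (fun ξ => DW γ (W ξ) (Z ξ) * deriv W ξ) =ᶠ[𝓝 0] fun ξ => NW γ r (W ξ) (Z ξ) := by
    filter_upwards [hmem] with ξ hξ using (hode ξ hξ).1
  have eZ : (fun ξ => DZ γ (W ξ) (Z ξ) * deriv Z ξ) =ᶠ[𝓝 0] fun ξ => NZ γ r (W ξ) (Z ξ) := by
    filter_upwards [hmem] with ξ hξ using (hode ξ hξ).2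
  intro m hm Ws Zs
  have hDWf : (fun ξ => DW γ (W ξ) (Z ξ)) =
      fun ξ => 1 + ((1 + alphaF γ) / 2 * W ξ + (1 - alphaF γ) / 2 * Z ξ) := by
    funext ξ; unfold DW; ring
  have hDZf : (fun ξ => DZ γ (W ξ) (Z ξ)) =
      fun ξ => 1 + ((1 - alphaF γ) / 2 * W ξ + (1 + alphaF γ) / 2 * Z ξ) := by
    funext ξ; unfold DZ; ring
  have cDW : ContDiffAt ℝ (⊤ : ℕ∞) (fun ξ => DW γ (W ξ) (Z ξ)) 0 := by
    rw [hDWf]; fun_prop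
  have cDZ : ContDiffAt ℝ (⊤ : ℕ∞) (fun ξ => DZ γ (W ξ) (Z ξ)) 0 := by
    rw [hDZf]; fun_prop
  have hDW : ∀ i, iteratedDeriv i (fun ξ => DW γ (W ξ) (Z ξ)) 0 = DWseq γ Ws Zs i := by
    rintro (_ | i)
    · simp [DWseq, Ws, Zs]
    · rw [hDWf, iteratedDeriv_affine cW cZ]; rfl
  have hDZ : ∀ i, iteratedDeriv i (fun ξ => DZ γ (W ξ) (Z ξ)) 0 = DZseq γ Ws Zs i := by
    rintro (_ | i)
    · simp [DZseq, Ws, Zs]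
    · rw [hDZf, iteratedDeriv_affine cW cZ]; rfl
  have hNW : ∀ i, iteratedDeriv (i + 1) (fun ξ => NW γ r (W ξ) (Z ξ)) 0
      = NWseq γ r Ws Zs (i + 1) := fun i => by
    have h : (fun ξ => NW γ r (W ξ) (Z ξ)) = fun ξ => -r * W ξ + 0 * Z ξ
        + -(1 + 2 * alphaF γ) / 2 * W ξ ^ 2 + -((1 - alphaF γ) / 2) * (W ξ * Z ξ)
        + alphaF γ / 2 * Z ξ ^ 2 := by
      funext ξ; unfold NW; ring
    rw [h, iteratedDeriv_quadratic cW cZ cW' cZ']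
    simp only [NWseq, gradNW1, gradNW2, hessNW, Ws, Zs, iteratedDeriv_zero]
    congr 1
    · ring
    · exact Finset.sum_congr rfl fun j _ => by ring
  have hNZ : ∀ i, iteratedDeriv (i + 1) (fun ξ => NZ γ r (W ξ) (Z ξ)) 0
      = NZseq γ r Ws Zs (i + 1) := fun i => by
    have h : (fun ξ => NZ γ r (W ξ) (Z ξ)) = fun ξ => 0 * W ξ + -r * Z ξ
        + alphaF γ / 2 * W ξ ^ 2 + -((1 - alphaF γ) / 2) * (W ξ * Z ξ)
        + -(1 + 2 * alphaF γ) / 2 * Z ξ ^ 2 := by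
      funext ξ; unfold NZ; ring
    rw [h, iteratedDeriv_quadratic cW cZ cW' cZ']
    simp only [NZseq, gradNZ1, gradNZ2, hessNZ, Ws, Zs, iteratedDeriv_zero]
    congr 1
    · ring
    · exact Finset.sum_congr rfl fun j _ => by ring
  have recW : ∀ i, ∑ j ∈ Finset.range (i + 2),
      (Nat.choose (i + 1) j : ℝ) * DWseq γ Ws Zs (i + 1 - j) * Ws (j + 1)
        = NWseq γ r Ws Zs (i + 1) := fun i => by
    rw [← hNW, ← eW.iteratedDeriv_eq, iteratedDeriv_mul_deriv cDW cW']
    simp only [hDW, Ws]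
  have recZ : ∀ i, ∑ j ∈ Finset.range (i + 2),
      (Nat.choose (i + 1) j : ℝ) * DZseq γ Ws Zs (i + 1 - j) * Zs (j + 1)
        = NZseq γ r Ws Zs (i + 1) := fun i => by
    rw [← hNZ, ← eZ.iteratedDeriv_eq, iteratedDeriv_mul_deriv cDZ cZ']
    simp only [hDZ, Zs]
  have Ws0 : Ws 0 = W₀ γ r := by simp [Ws, hW0]
  have Zs0 : Zs 0 = Z₀ γ r := by simp [Zs, hZ0]
  have Ws1 : Ws 1 = W₁ γ r := by simp [Ws, hW1]
  have Zs1 : Zs 1 = Z₁ γ r := by simp [Zs, hZ1]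
  have D1 : DZseq γ Ws Zs 1 = -(1 / 4) * (-4 + (1 + γ) * (r - 1) / (γ - 1) + R2 γ r) := by
    rw [← DZ1_eq hγ, ← Ws1, ← Zs1]; rfl
  -- A vanishing denominator would give `k(r) = 0` by the convention `x / 0 = 0`,
  -- which `n < k(r)` excludes.
  have hden : -4 + (1 + γ) * (r - 1) / (γ - 1) + R2 γ r ≠ 0 := fun h => by
    have hk : kFun γ r = 0 := by rw [kFun, h, div_zero]
    have := Nat.cast_nonneg (α := ℝ) n
    linarith
  have hDk : DZseq γ Ws Zs 1 * kFun γ r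
      = pZNZ γ r (W₀ γ r) (Z₀ γ r) - (1 + alphaF γ) / 2 * Z₁ γ r := by
    rw [D1, pZNZ_eq hγ, kFun, mul_assoc, mul_div_cancel₀ _ hden]
  have hmk : (m : ℝ) - kFun γ r ≠ 0 := fun h => by
    have e : kFun γ r = m := by linarith
    rw [e] at hk1 hk2
    have h1 : n < m := by exact_mod_cast hk1
    have h2 : m < n + 1 := by exact_mod_cast hk2
    omega
  obtain ⟨k, rfl⟩ : ∃ k, m = k + 2 := ⟨m - 2, by omega⟩
  refine ⟨?_, ?_, ?_, ?_, ?_⟩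
  · have := recW k
    rw [Finset.sum_range_succ] at this
    simp only [Nat.choose_self, Nat.sub_self] at this
    push_cast at this
    simp only [show k + 2 - 1 = k + 1 by omega]
    linarith
  · have h := recZ (k + 1)
    -- The terms `j = 0, m - 1, m` are isolated; the last vanishes because `D_Z(P_s) = 0`, and
    -- the first two carry all occurrences of `Z_m` on the left-hand side.
    rw [Finset.sum_range_succ, Finset.sum_range_succ, Finset.range_eq_Ico,
      Finset.sum_eq_sum_Ico_succ_bot (Nat.succ_pos k)] at h
    have hc : (Nat.choose (k + 1 + 1) (k + 1) : ℝ) = k + 2 := by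
      rw [Nat.choose_succ_self_right]; push_cast; ring
    have hD0 : DZseq γ Ws Zs 0 = 0 := by
      rw [DZseq, Ws0, Zs0, DZ_sonic hγ]
    have hDm : DZseq γ Ws Zs (k + 2) =
        (1 - alphaF γ) / 2 * Ws (k + 2) + (1 + alphaF γ) / 2 * Zs (k + 2) := rfl
    simp only [hc, Nat.sub_self, hD0, show k + 1 + 1 - (k + 1) = 1 by omega, Nat.choose_zero_right,
      Nat.sub_zero, zero_add, Zs1, hDm, show k + 1 + 1 = k + 2 by omega] at h
    simp only [show k + 2 - 1 = k + 1 by omega]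
    push_cast at h ⊢
    linear_combination h - Zs (k + 2) * hDk
  · rw [DWseq, Ws0, Zs0]
    exact DW_sonic_ne_zero hγ hr1 hr2
  · exact mul_ne_zero (by rw [D1]; exact mul_ne_zero (by norm_num) hden) hmk
  · intro z
    have hs : ∑ j ∈ Finset.Ico 1 (k + 1 + 1), (Nat.choose (k + 1) (j - 1) : ℝ) *
          hessNZ γ (Ws (k + 1 + 1 - j)) (Function.update Zs (k + 2) z (k + 1 + 1 - j)) (Ws j)
            (Function.update Zs (k + 2) z j)
        = ∑ j ∈ Finset.Ico 1 (k + 1 + 1), (Nat.choose (k + 1) (j - 1) : ℝ) *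
          hessNZ γ (Ws (k + 1 + 1 - j)) (Zs (k + 1 + 1 - j)) (Ws j) (Zs j) := by
      refine Finset.sum_congr rfl fun j hj => ?_
      have hj' := Finset.mem_Ico.1 hj
      rw [Function.update_of_ne (by omega), Function.update_of_ne (by omega)]
    have h0 : Function.update Zs (k + 2) z 0 = Zs 0 := Function.update_of_ne (by omega) _ _
    have hm' : Function.update Zs (k + 2) z (k + 1 + 1) = z := Function.update_self _ _ _
    rw [show k + 2 = (k + 1) + 1 by omega] at *
    simp only [NZseq, hs, h0, hm', pZNZ_eq_gradNZ2, Ws0, Zs0]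
    ring

end SelfSimilarImplosion
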